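/- Let X be a well-filtered coherent T0 space. If X is first-countable, then X is sober. -/

import Mathlib

/-- A subset of a topological space is saturated if it is the intersection of the open sets
containing it. -/
def IsSaturatedSet {X : Type*} [TopologicalSpace X] (A : Set X) : Prop :=
  A = ⋂₀ {U : Set X | IsOpen U ∧ A ⊆ U}

/-- A space is well-filtered if for every filtered family 𝓕 of compact saturated sets and every
open U with ⋂𝓕 ⊆ U, some member of 𝓕 is contained in U. -/
def WellFiltered (X : Type*) [TopologicalSpace X] : Prop :=
  ∀ 𝓕 : Set (Set X), 𝓕.Nonempty → (∀ K ∈ 𝓕, IsCompact K ∧ IsSaturatedSet K) →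
    DirectedOn (fun A B => B ⊆ A) 𝓕 →
    ∀ U : Set X, IsOpen U → ⋂₀ 𝓕 ⊆ U → ∃ K ∈ 𝓕, K ⊆ U

/-- A space is coherent if the intersection of any two compact saturated sets is compact. -/
def Coherent (X : Type*) [TopologicalSpace X] : Prop :=
  ∀ K Q : Set X, IsCompact K → IsSaturatedSet K → IsCompact Q → IsSaturatedSet Q →
    IsCompact (K ∩ Q)

open Filter Topology Set

theorem isSaturatedSet_nhdsKer {X : Type*} [TopologicalSpace X] (S : Set X) :
    IsSaturatedSet (nhdsKer S) := by
  apply Subset.antisymm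
  · exact subset_sInter fun U hU => hU.2
  · intro z hz
    rw [nhdsKer_def]
    rintro U ⟨hU, hSU⟩
    exact hz U ⟨hU, hU.nhdsKer_subset.2 hSU⟩

theorem IsSaturatedSet.inter {X : Type*} [TopologicalSpace X] {A B : Set X}
    (hA : IsSaturatedSet A) (hB : IsSaturatedSet B) : IsSaturatedSet (A ∩ B) := by
  apply Subset.antisymm
  · exact subset_sInter fun U hU => hU.2
  · intro z hz
    constructor
    · rw [hA]
      exact fun U hU => hz U ⟨hU.1, inter_subset_left.trans hU.2⟩
    · rw [hB]
      exact fun U hU => hz U ⟨hU.1, inter_subset_right.trans hU.2⟩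

/-- In a well-filtered space, a closed set meeting every member of a filtered family of compact
saturated sets meets the intersection of the family. -/
theorem WellFiltered.inter_sInter_nonempty {X : Type*} [TopologicalSpace X]
    (hwf : WellFiltered X) {𝓕 : Set (Set X)} (hne : 𝓕.Nonempty)
    (hK : ∀ K ∈ 𝓕, IsCompact K ∧ IsSaturatedSet K) (hdir : DirectedOn (fun A B => B ⊆ A) 𝓕)
    {C : Set X} (hC : IsClosed C) (hmeet : ∀ K ∈ 𝓕, (C ∩ K).Nonempty) :
    (C ∩ ⋂₀ 𝓕).Nonempty := by
  by_contra hempty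
  obtain ⟨K, hK𝓕, hKC⟩ := hwf 𝓕 hne hK hdir Cᶜ hC.isOpen_compl
    fun z hz hzC => hempty ⟨z, hzC, hz⟩
  obtain ⟨z, hzC, hzK⟩ := hmeet K hK𝓕
  exact hKC hzK hzC

/-- The saturation of the `n`-th tail of a sequence together with a point. -/
def saturatedTail {X : Type*} [TopologicalSpace X] (a : ℕ → X) (x : X) (n : ℕ) : Set X :=
  nhdsKer (insert x (range fun k => a (k + n)))

theorem isCompact_saturatedTail {X : Type*} [TopologicalSpace X] {a : ℕ → X} {x : X}
    (ha : Tendsto a atTop (𝓝 x)) (n : ℕ) : IsCompact (saturatedTail a x n) :=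
  (((tendsto_add_atTop_iff_nat n).2 ha).isCompact_insert_range).nhdsKer

theorem mem_saturatedTail {X : Type*} [TopologicalSpace X] (a : ℕ → X) (x : X) {n m : ℕ}
    (h : n ≤ m) : a m ∈ saturatedTail a x n :=
  subset_nhdsKer (Or.inr ⟨m - n, congrArg a (Nat.sub_add_cancel h)⟩)

theorem antitone_saturatedTail {X : Type*} [TopologicalSpace X] (a : ℕ → X) (x : X) :
    Antitone (saturatedTail a x) := by
  intro n m h
  apply nhdsKer_mono
  apply insert_subset_insert
  rintro _ ⟨k, rfl⟩
  exact ⟨k + (m - n), congrArg a (by omega)⟩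

theorem specializes_of_forall_mem_saturatedTail {X : Type*} [TopologicalSpace X] {a : ℕ → X}
    {x z : X} (ha : Tendsto a atTop (𝓝 x)) (hz : ∀ n, z ∈ saturatedTail a x n) : z ⤳ x := by
  rw [specializes_iff_forall_open]
  intro U hU hxU
  obtain ⟨n, hn⟩ := eventually_atTop.1 (ha.eventually (hU.mem_nhds hxU))
  refine hU.nhdsKer_subset.2 (insert_subset hxU ?_) (hz n)
  rintro _ ⟨k, rfl⟩
  exact hn _ (Nat.le_add_left n k)

/-- In a first-countable coherent well-filtered space, irreducible closed sets are directed in the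
specialization order. -/
theorem exists_specializes_of_isIrreducible {X : Type*} [TopologicalSpace X]
    [FirstCountableTopology X] (hwf : WellFiltered X) (hcoh : Coherent X) {C : Set X}
    (hirr : IsIrreducible C) (hC : IsClosed C) {x y : X} (hx : x ∈ C) (hy : y ∈ C) :
    ∃ z ∈ C, z ⤳ x ∧ z ⤳ y := by
  have hne : NeBot (𝓝 x ⊓ 𝓝 y ⊓ 𝓟 C) := by
    rw [((nhds_basis_opens x).inf (nhds_basis_opens y)).inf_principal_neBot_iff]
    rintro ⟨U, V⟩ ⟨⟨hxU, hU⟩, hyV, hV⟩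
    obtain ⟨z, hzC, hz⟩ := hirr.isPreirreducible U V hU hV ⟨x, hx, hxU⟩ ⟨y, hy, hyV⟩
    exact ⟨z, hz, hzC⟩
  obtain ⟨a, ha⟩ := exists_seq_tendsto (𝓝 x ⊓ 𝓝 y ⊓ 𝓟 C)
  rw [tendsto_inf, tendsto_inf, tendsto_principal] at ha
  obtain ⟨⟨hax, hay⟩, haC⟩ := ha
  obtain ⟨N, hN⟩ := eventually_atTop.1 haC
  obtain ⟨z, hzC, hz⟩ := hwf.inter_sInter_nonempty
    (𝓕 := range fun n => saturatedTail a x n ∩ saturatedTail a y n) (range_nonempty _)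
    (by
      rintro _ ⟨n, rfl⟩
      exact ⟨hcoh _ _ (isCompact_saturatedTail hax n) (isSaturatedSet_nhdsKer _)
        (isCompact_saturatedTail hay n) (isSaturatedSet_nhdsKer _),
        (isSaturatedSet_nhdsKer _).inter (isSaturatedSet_nhdsKer _)⟩)
    (by
      rintro _ ⟨n, rfl⟩ _ ⟨m, rfl⟩
      exact ⟨_, ⟨max n m, rfl⟩,
        inter_subset_inter (antitone_saturatedTail a x (le_max_left n m))
          (antitone_saturatedTail a y (le_max_left n m)),
        inter_subset_inter (antitone_saturatedTail a x (le_max_right n m))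
          (antitone_saturatedTail a y (le_max_right n m))⟩)
    hC
    (by
      rintro _ ⟨n, rfl⟩
      exact ⟨a (max n N), hN _ (le_max_right n N), mem_saturatedTail a x (le_max_left n N),
        mem_saturatedTail a y (le_max_left n N)⟩)
  rw [sInter_range, mem_iInter] at hz
  exact ⟨z, hzC, specializes_of_forall_mem_saturatedTail hax fun n => (hz n).1,
    specializes_of_forall_mem_saturatedTail hay fun n => (hz n).2⟩

/-- Let X be a well-filtered coherent T0 space. If X is first-countable, then X
is sober. -/
theorem stmt6 {X : Type*} [TopologicalSpace X] [T0Space X]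
    (hwf : WellFiltered X) (hcoh : Coherent X)
    [FirstCountableTopology X] :
    QuasiSober X := by
  refine ⟨fun {C} hirr hC => ?_⟩
  obtain ⟨z, hzC, hz⟩ := hwf.inter_sInter_nonempty
    (𝓕 := image (fun x => nhdsKer {x}) C) (hirr.nonempty.image _)
    (by
      rintro _ ⟨x, -, rfl⟩
      exact ⟨isCompact_singleton.nhdsKer, isSaturatedSet_nhdsKer _⟩)
    (by
      rintro _ ⟨x, hx, rfl⟩ _ ⟨y, hy, rfl⟩
      obtain ⟨z, hzC, hzx, hzy⟩ := exists_specializes_of_isIrreducible hwf hcoh hirr hC hx hy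
      exact ⟨_, ⟨z, hzC, rfl⟩, fun w hw => mem_nhdsKer_singleton.2
          ((mem_nhdsKer_singleton.1 hw).trans hzx),
        fun w hw => mem_nhdsKer_singleton.2 ((mem_nhdsKer_singleton.1 hw).trans hzy)⟩)
    hC
    (by
      rintro _ ⟨x, hx, rfl⟩
      exact ⟨x, hx, subset_nhdsKer rfl⟩)
  refine ⟨z, Subset.antisymm (closure_minimal (singleton_subset_iff.2 hzC) hC) fun x hx => ?_⟩
  exact (mem_nhdsKer_singleton.1 (hz _ ⟨x, hx, rfl⟩)).mem_closure
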